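/- With the notation of the odd-case construction: the discriminant of the monic cubic polynomial x³ − (p₂²/4)x² + (p₀ − p₂q₂/2)x + (q₀ − q₂²/4) over R[u] equals 729u⁶(u−9)²(u−9/4)²/16 in R[u]. -/

import Mathlib

open Polynomial

/-!
The parameters are those of Shioda's `E₆` family of rational elliptic surfaces
`y² = x³ + x (p₀ + p₁ t + p₂ t²) + q₀ + q₁ t + q₂ t² + t⁴`, recovered from the coefficients of
a degree-27 polynomial `Q(u, S)`. This polynomial has the form `S³ P(S²)`, hence is odd in `S`, so
`p₁ = 0`. Once the remaining parameters are computed, the cubic `x³ + A x² + B x + C` turns out to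
split: its roots are one sixteenth of `3u² + 114u + 27`, `3u² + 6u + 27` and `19u² - 30u + 27`.
The pairwise differences `108u`, `-16u(u - 9)` and `-4u(4u - 9)` of these three polynomials account
for the factors of the discriminant.
-/

section CubicDiscriminant

variable {K : Type*} [CommRing K]

theorem cubic_discr_of_toPoly_eq_prod_X_sub_C {P : Cubic K} {x y z : K}
    (hP : P.toPoly = (X - C x) * (X - C y) * (X - C z)) :
    P.discr = ((x - y) * (x - z) * (y - z)) ^ 2 := by
  rw [Cubic.prod_X_sub_C_eq, Cubic.toPoly_injective] at hP
  subst hP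
  simp only [Cubic.discr]
  ring

theorem cubic_discr_scale_roots (k a b c d : K) :
    Cubic.discr ⟨a, k * b, k ^ 2 * c, k ^ 3 * d⟩ = k ^ 6 * Cubic.discr ⟨a, b, c, d⟩ := by
  simp only [Cubic.discr]
  ring

end CubicDiscriminant

section FundamentalPolynomial

variable {K : Type*} [CommRing K] (u : K)

/-- The polynomial `Q(u, S)` in `S`, of degree 27, whose coefficients determine the parameters of
the `E₆` surface; the name follows Shioda. The parameter `u` may lie in any
commutative ring `K`; the case of interest is `K = R[u]`. -/
noncomputable def fundamentalPolynomial : K[X] :=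
  X ^ 3 * (X ^ 2 - 9) ^ 2 * (X ^ 2 - C u) ^ 3 * (X ^ 2 - 4 * C u) ^ 2 * (X ^ 2 - 9 * C u) *
    (X ^ 4 - (18 + 2 * C u) * X ^ 2 + (9 - C u) ^ 2) *
    (X ^ 4 - (18 + 8 * C u) * X ^ 2 + (9 - 4 * C u) ^ 2)

/-- The polynomial `P` of degree 12 with `Q(u, S) = S³ P(S²)`; its roots are the squares `s²` of
the 12 pairs `±s` of roots of `Q(u, S)` that remain after removing the factor `S³`. -/
noncomputable def squaredRootPolynomial : K[X] :=
  (X - 9) ^ 2 * (X - C u) ^ 3 * (X - 4 * C u) ^ 2 * (X - 9 * C u) *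
    (X ^ 2 - (18 + 2 * C u) * X + (9 - C u) ^ 2) *
    (X ^ 2 - (18 + 8 * C u) * X + (9 - 4 * C u) ^ 2)

theorem fundamentalPolynomial_eq_X_pow_mul_expand :
    fundamentalPolynomial u = X ^ 3 * expand K 2 (squaredRootPolynomial u) := by
  simp only [fundamentalPolynomial, squaredRootPolynomial, map_mul, map_pow, map_add, map_sub,
    map_ofNat, expand_X, expand_C]
  ring

theorem coeff_fundamentalPolynomial_two_mul_add_three (k : ℕ) :
    (fundamentalPolynomial u).coeff (2 * k + 3) = (squaredRootPolynomial u).coeff k := by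
  rw [fundamentalPolynomial_eq_X_pow_mul_expand, coeff_X_pow_mul, coeff_expand_mul' two_pos]

theorem coeff_fundamentalPolynomial_of_even {m : ℕ} (hm : Even m) :
    (fundamentalPolynomial u).coeff m = 0 := by
  rw [fundamentalPolynomial_eq_X_pow_mul_expand, coeff_X_pow_mul', coeff_expand two_pos]
  grind

theorem squaredRootPolynomial_eq_sum :
    squaredRootPolynomial u = X ^ 12 +
      C (-30 * u - 54) * X ^ 11 +
      C (375 * u ^ 2 + 1350 * u + 1215) * X ^ 10 +
      C (-2580 * u ^ 3 - 13680 * u ^ 2 - 25920 * u - 14580) * X ^ 9 +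
      C (10815 * u ^ 4 + 75780 * u ^ 3 + 210600 * u ^ 2 + 277020 * u + 98415) * X ^ 8 +
      C (-28830 * u ^ 5 - 257094 * u ^ 4 - 899100 * u ^ 3 - 1828332 * u ^ 2 - 1771470 * u -
        354294) * X ^ 7 +
      C (49545 * u ^ 6 + 558990 * u ^ 5 + 2353131 * u ^ 4 + 5598720 * u ^ 3 + 10254843 * u ^ 2 +
        6495390 * u + 531441) * X ^ 6 +
      C (-54480 * u ^ 7 - 791028 * u ^ 6 - 3960900 * u ^ 5 - 10144764 * u ^ 4 - 21651300 * u ^ 3 -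
        38499948 * u ^ 2 - 10628820 * u) * X ^ 5 +
      C (36960 * u ^ 8 + 746280 * u ^ 7 + 3753702 * u ^ 6 + 15848460 * u ^ 5 + 10372941 * u ^ 4 +
        79125660 * u ^ 3 + 75464622 * u ^ 2) * X ^ 4 +
      C (-14080 * u ^ 9 - 480672 * u ^ 8 - 1467720 * u ^ 7 - 16449156 * u ^ 6 - 10431990 * u ^ 5 +
        19013778 * u ^ 4 - 244462860 * u ^ 3) * X ^ 3 +
      C (2304 * u ^ 10 + 201600 * u ^ 9 + 55728 * u ^ 8 + 2886840 * u ^ 7 + 66193929 * u ^ 6 -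
        236786490 * u ^ 5 + 378917433 * u ^ 4) * X ^ 2 +
      C (-41472 * u ^ 10 - 207360 * u ^ 9 + 8024832 * u ^ 8 - 84243240 * u ^ 7 +
        256036464 * u ^ 6 - 276349320 * u ^ 5) * X +
      C (186624 * u ^ 10 - 4199040 * u ^ 9 + 31177872 * u ^ 8 - 85030560 * u ^ 7 +
        76527504 * u ^ 6) := by
  simp only [squaredRootPolynomial, map_add, map_sub, map_mul, map_pow, map_neg, map_ofNat]
  ring

theorem coeff_fundamentalPolynomial_25 :
    (fundamentalPolynomial u).coeff 25 = -30 * u - 54 := by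
  rw [coeff_fundamentalPolynomial_two_mul_add_three u 11, squaredRootPolynomial_eq_sum]
  simp [coeff_X_pow, -map_add, -map_sub]

theorem coeff_fundamentalPolynomial_21 :
    (fundamentalPolynomial u).coeff 21 =
      -2580 * u ^ 3 - 13680 * u ^ 2 - 25920 * u - 14580 := by
  rw [coeff_fundamentalPolynomial_two_mul_add_three u 9, squaredRootPolynomial_eq_sum]
  simp [coeff_X_pow, -map_add, -map_sub]

theorem coeff_fundamentalPolynomial_19 :
    (fundamentalPolynomial u).coeff 19 =
      10815 * u ^ 4 + 75780 * u ^ 3 + 210600 * u ^ 2 + 277020 * u + 98415 := by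
  rw [coeff_fundamentalPolynomial_two_mul_add_three u 8, squaredRootPolynomial_eq_sum]
  simp [coeff_X_pow, -map_add, -map_sub]

theorem coeff_fundamentalPolynomial_15 :
    (fundamentalPolynomial u).coeff 15 =
      49545 * u ^ 6 + 558990 * u ^ 5 + 2353131 * u ^ 4 + 5598720 * u ^ 3 + 10254843 * u ^ 2 +
        6495390 * u + 531441 := by
  rw [coeff_fundamentalPolynomial_two_mul_add_three u 6, squaredRootPolynomial_eq_sum]
  simp [coeff_X_pow, -map_add, -map_sub]

end FundamentalPolynomial

section SurfaceParameters

variable {K : Type*} [CommRing K] {u p₂ p₁ q₂ p₀ q₀ : K}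

theorem two_mul_p₂_eq (h2 : IsRegular (2 : K)) (h3 : IsRegular (3 : K))
    (hp₂ : 12 * p₂ = (fundamentalPolynomial u).coeff 25) :
    2 * p₂ = -5 * u - 9 := by
  rw [coeff_fundamentalPolynomial_25] at hp₂
  refine (h2.mul h3).left (?_ : 2 * 3 * (2 * p₂) = 2 * 3 * (-5 * u - 9))
  linear_combination hp₂

theorem p₁_eq_zero (h2 : IsRegular (2 : K)) (h3 : IsRegular (3 : K))
    (hp₁ : 48 * p₁ = (fundamentalPolynomial u).coeff 22) :
    p₁ = 0 := by
  rw [coeff_fundamentalPolynomial_of_even u (by decide)] at hp₁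
  refine ((h2.pow 4).mul h3).left (?_ : 2 ^ 4 * 3 * p₁ = 2 ^ 4 * 3 * 0)
  linear_combination hp₁

theorem thirtyTwo_mul_q₂_eq (h3 : IsRegular (3 : K)) (hp₂ : 2 * p₂ = -5 * u - 9)
    (hq₂ : 96 * q₂ = (fundamentalPolynomial u).coeff 21 - 168 * p₂ ^ 3) :
    32 * q₂ = 15 * u ^ 3 + 165 * u ^ 2 - 135 * u + 243 := by
  refine h3.left ?_
  calc 3 * (32 * q₂) = (fundamentalPolynomial u).coeff 21 - 21 * (2 * p₂) ^ 3 := by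
        linear_combination hq₂
    _ = 3 * (15 * u ^ 3 + 165 * u ^ 2 - 135 * u + 243) := by
        rw [hp₂, coeff_fundamentalPolynomial_21]; ring

theorem twoHundredFiftySix_mul_p₀_eq (h3 : IsRegular (3 : K)) (h5 : IsRegular (5 : K))
    (hp₂ : 2 * p₂ = -5 * u - 9) (hq₂ : 32 * q₂ = 15 * u ^ 3 + 165 * u ^ 2 - 135 * u + 243)
    (hp₀ : 480 * p₀ = (fundamentalPolynomial u).coeff 19 - 294 * p₂ ^ 4 - 528 * p₂ * q₂) :
    256 * p₀ = -27 * u ^ 4 + 540 * u ^ 3 - 3186 * u ^ 2 + 4860 * u - 2187 := by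
  refine (h3.mul h5).left ?_
  calc 3 * 5 * (256 * p₀) =
      8 * (fundamentalPolynomial u).coeff 19 - 147 * (2 * p₂) ^ 4 -
        66 * (2 * p₂) * (32 * q₂) := by
        linear_combination 8 * hp₀
    _ = 3 * 5 * (-27 * u ^ 4 + 540 * u ^ 3 - 3186 * u ^ 2 + 4860 * u - 2187) := by
        rw [hp₂, hq₂, coeff_fundamentalPolynomial_19]; ring

theorem twoThousandFortyEight_mul_q₀_eq (h2 : IsRegular (2 : K)) (h3 : IsRegular (3 : K))
    (h5 : IsRegular (5 : K))
    (hp₂ : 2 * p₂ = -5 * u - 9) (hp₁ : p₁ = 0)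
    (hq₂ : 32 * q₂ = 15 * u ^ 3 + 165 * u ^ 2 - 135 * u + 243)
    (hp₀ : 256 * p₀ = -27 * u ^ 4 + 540 * u ^ 3 - 3186 * u ^ 2 + 4860 * u - 2187)
    (hq₀ : 17280 * q₀ = (fundamentalPolynomial u).coeff 15 - 608 * p₁ ^ 2 * p₂ -
      4768 * p₀ * p₂ ^ 2 - 252 * p₂ ^ 6 - 1200 * p₂ ^ 3 * q₂ + 1248 * q₂ ^ 2) :
    2048 * q₀ = 27 * u ^ 6 - 810 * u ^ 5 + 8829 * u ^ 4 - 41580 * u ^ 3 + 79461 * u ^ 2 -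
      65610 * u + 19683 := by
  refine ((h2.mul (h3.pow 3)).mul h5).left ?_
  calc 2 * 3 ^ 3 * 5 * (2048 * q₀) =
      32 * (fundamentalPolynomial u).coeff 15 - 149 * (256 * p₀) * (2 * p₂) ^ 2 -
        126 * (2 * p₂) ^ 6 - 150 * (2 * p₂) ^ 3 * (32 * q₂) + 39 * (32 * q₂) ^ 2 := by
        rw [hp₁] at hq₀; linear_combination 32 * hq₀
    _ = 2 * 3 ^ 3 * 5 * (27 * u ^ 6 - 810 * u ^ 5 + 8829 * u ^ 4 - 41580 * u ^ 3 +
        79461 * u ^ 2 - 65610 * u + 19683) := by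
        rw [hp₂, hq₂, hp₀, coeff_fundamentalPolynomial_15]; ring

end SurfaceParameters

section DiscriminantOfSurfaceCubic

variable {K : Type*} [CommRing K] {u p₂ q₂ p₀ q₀ a b c : K}

-- Completing the square at `p₁ = q₁ = 0` gives
-- `y² = (t² + (p₂ x + q₂) / 2)² + x³ + a x² + b x + c`, which is where `a`, `b`, `c` come from.
theorem toPoly_sixteen_scaled_eq_prod
    (hp₂ : 2 * p₂ = -5 * u - 9)
    (hq₂ : 32 * q₂ = 15 * u ^ 3 + 165 * u ^ 2 - 135 * u + 243)
    (hp₀ : 256 * p₀ = -27 * u ^ 4 + 540 * u ^ 3 - 3186 * u ^ 2 + 4860 * u - 2187)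
    (hq₀ : 2048 * q₀ = 27 * u ^ 6 - 810 * u ^ 5 + 8829 * u ^ 4 - 41580 * u ^ 3 +
      79461 * u ^ 2 - 65610 * u + 19683)
    (ha : 4 * a = -(p₂ ^ 2)) (hb : 2 * b = 2 * p₀ - p₂ * q₂) (hc : 4 * c = 4 * q₀ - q₂ ^ 2) :
    (⟨1, 16 * a, 16 ^ 2 * b, 16 ^ 3 * c⟩ : Cubic K).toPoly =
      (X - C (3 * u ^ 2 + 114 * u + 27)) * (X - C (3 * u ^ 2 + 6 * u + 27)) *
        (X - C (19 * u ^ 2 - 30 * u + 27)) := by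
  have a_eq : 16 * a = -(2 * p₂) ^ 2 := by linear_combination 4 * ha
  have b_eq : 16 ^ 2 * b = 256 * p₀ - 2 * (2 * p₂) * (32 * q₂) := by linear_combination 128 * hb
  have c_eq : 16 ^ 3 * c = 2 * (2048 * q₀) - (32 * q₂) ^ 2 := by linear_combination 1024 * hc
  rw [Cubic.prod_X_sub_C_eq, a_eq, b_eq, c_eq, hp₂, hq₂, hp₀, hq₀]
  congr 2 <;> ring

theorem discr_eq_of_toPoly_sixteen_scaled_eq (h2 : IsRegular (2 : K))
    (h : (⟨1, 16 * a, 16 ^ 2 * b, 16 ^ 3 * c⟩ : Cubic K).toPoly =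
      (X - C (3 * u ^ 2 + 114 * u + 27)) * (X - C (3 * u ^ 2 + 6 * u + 27)) *
        (X - C (19 * u ^ 2 - 30 * u + 27))) :
    256 * Cubic.discr ⟨1, a, b, c⟩ = 729 * u ^ 6 * (u - 9) ^ 2 * (4 * u - 9) ^ 2 := by
  have discr_scaled := cubic_discr_of_toPoly_eq_prod_X_sub_C h
  rw [cubic_discr_scale_roots] at discr_scaled
  refine (h2.pow 16).left
    (?_ : 2 ^ 16 * _ = 2 ^ 16 * (729 * u ^ 6 * (u - 9) ^ 2 * (4 * u - 9) ^ 2))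
  linear_combination discr_scaled

end DiscriminantOfSurfaceCubic

theorem stmt_14_general {K : Type*} [CommRing K]
    (h2 : IsRegular (2 : K)) (h3 : IsRegular (3 : K)) (h5 : IsRegular (5 : K))
    (u : K) (ε : ℕ → K) (hε : ∀ m ≤ 27, ε m = (fundamentalPolynomial u).coeff (27 - m))
    (p₂ p₁ q₂ p₀ q₀ : K)
    (hp₂ : 12 * p₂ = ε 2)
    (hp₁ : 48 * p₁ = ε 5)
    (hq₂ : 96 * q₂ = ε 6 - 168 * p₂ ^ 3)
    (hp₀ : 480 * p₀ = ε 8 - 294 * p₂ ^ 4 - 528 * p₂ * q₂)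
    (hq₀ : 17280 * q₀ = ε 12 - 608 * p₁ ^ 2 * p₂ - 4768 * p₀ * p₂ ^ 2 - 252 * p₂ ^ 6 -
      1200 * p₂ ^ 3 * q₂ + 1248 * q₂ ^ 2)
    (a b c : K)
    (ha : 4 * a = -(p₂ ^ 2))
    (hb : 2 * b = 2 * p₀ - p₂ * q₂)
    (hc : 4 * c = 4 * q₀ - q₂ ^ 2) :
    256 * Cubic.discr ⟨1, a, b, c⟩ = 729 * u ^ 6 * (u - 9) ^ 2 * (4 * u - 9) ^ 2 := by
  rw [hε _ (by norm_num)] at hp₂ hp₁ hq₂ hp₀ hq₀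
  have p₂_eq := two_mul_p₂_eq h2 h3 hp₂
  have p₁_eq := p₁_eq_zero h2 h3 hp₁
  have q₂_eq := thirtyTwo_mul_q₂_eq h3 p₂_eq hq₂
  have p₀_eq := twoHundredFiftySix_mul_p₀_eq h3 h5 p₂_eq q₂_eq hp₀
  have q₀_eq := twoThousandFortyEight_mul_q₀_eq h2 h3 h5 p₂_eq p₁_eq q₂_eq p₀_eq hq₀
  exact discr_eq_of_toPoly_sixteen_scaled_eq h2
    (toPoly_sixteen_scaled_eq_prod p₂_eq q₂_eq p₀_eq q₀_eq ha hb hc)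

/-- Odd case: the discriminant of the monic cubic `x³ − (p₂²/4)x² + (p₀ − p₂q₂/2)x + (q₀ − q₂²/4)`
over `R[u]` equals `729u⁶(u−9)²(u−9/4)²/16`. Here `A = −p₂²/4`, `B = p₀ − p₂q₂/2`, `C = q₀ − q₂²/4`,
and `(u−9/4)²/16 = (4u−9)²/256`. -/
theorem stmt_14
    {R : Type*} [CommRing R]
    (h2 : IsUnit (2 : R)) (h3 : IsUnit (3 : R)) (h5 : IsUnit (5 : R)) (h7 : IsUnit (7 : R))
    (Q : Polynomial (Polynomial R))
    (hQ : Q = X ^ 3 * (X ^ 2 - 9) ^ 2 * (X ^ 2 - C X) ^ 3 * (X ^ 2 - 4 * C X) ^ 2 * (X ^ 2 - 9 * C X) *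
      
      (X ^ 4 - (18 + 2 * C X) * X ^ 2 + (9 - C X) ^ 2) *
      (X ^ 4 - (18 + 8 * C X) * X ^ 2 + (9 - 4 * C X) ^ 2))
    (ε : ℕ → Polynomial R) (hε : ∀ m ≤ 27, ε m = Q.coeff (27 - m))
    (p₂ p₁ q₂ p₀ q₁ q₀ : Polynomial R)
    (hp₂ : 12 * p₂ = ε 2)
    (hp₁ : 48 * p₁ = ε 5)
    (hq₂ : 96 * q₂ = ε 6 - 168 * p₂ ^ 3)
    (hp₀ : 480 * p₀ = ε 8 - 294 * p₂ ^ 4 - 528 * p₂ * q₂)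
    (hq₁ : 1344 * q₁ = ε 9 - 1008 * p₁ * p₂ ^ 2)
    (hq₀ : 17280 * q₀ = ε 12 - 608 * p₁ ^ 2 * p₂ - 4768 * p₀ * p₂ ^ 2 - 252 * p₂ ^ 6 -
      1200 * p₂ ^ 3 * q₂ + 1248 * q₂ ^ 2)
    (A B C : Polynomial R)
    (hA : 4 * A = -(p₂ ^ 2))
    (hB : 2 * B = 2 * p₀ - p₂ * q₂)
    (hC : 4 * C = 4 * q₀ - q₂ ^ 2)
    : 256 * (18 * A * B * C - 4 * A ^ 3 * C + A ^ 2 * B ^ 2 - 4 * B ^ 3 - 27 * C ^ 2) =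
      729 * X ^ 6 * (X - 9) ^ 2 * (4 * X - 9) ^ 2 := by
  subst hQ
  have discr_eq := stmt_14_general (h2.map Polynomial.C).isRegular (h3.map Polynomial.C).isRegular
    (h5.map Polynomial.C).isRegular X ε hε p₂ p₁ q₂ p₀ q₀ hp₂ hp₁ hq₂ hp₀ hq₀ A B C hA hB hC
  linear_combination (norm := (simp only [Cubic.discr]; ring)) discr_eq
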